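/- arXiv:2008.06309 — 2 statements merged into one kernel-verified Lean document; each statement's English description precedes it below -/
import Mathlib

section
/- Let s be a real number which is not an integer, and let a, z > 0 be real numbers with a ≠ 1. Then f_q(z q^{s}, a) tends to a^{−⌊s⌋}/(a − 1) as q tends to 0 from the right (q ranging over (0,1)), where ⌊s⌋ is the integer floor of s. In particular, for non-integer s this limit is independent of z. -/
open Filter Topology

/-- The q-theta function
`θ_q(x) = (x^{1/2} - x^{-1/2}) ∏_{i=1}^∞ (1 - x q^i)(1 - x⁻¹ q^i)`. -/
noncomputable def qTheta (q x : ℝ) : ℝ :=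
  (Real.sqrt x - (Real.sqrt x)⁻¹) *
    ∏' i : ℕ, (1 - x * q ^ (i + 1)) * (1 - x⁻¹ * q ^ (i + 1))

/-- `f_q(z, a) = θ_q(a z) / (θ_q(a) θ_q(z))`. -/
noncomputable def fTheta (q z a : ℝ) : ℝ :=
  qTheta q (a * z) / (qTheta q a * qTheta q z)

/-! Up to the factor `-x^{-1/2}`, `θ_q(x)` is the modified theta function
`θ(x; q) = (x; q)_∞ (q/x; q)_∞`, and these factors cancel in `f_q` up to sign. The relation
`θ(qx; q) = -x⁻¹ θ(x; q)` makes `f_q(z, a)` quasi-periodic in `z` with multiplier `a⁻¹`, so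
replacing `s` by its fractional part accounts for the factor `a^{-⌊s⌋}`. If `0 < s < 1` then
`w = z q^s` satisfies both `w → 0` and `q / w → 0`. Since `(x; q)_∞` is jointly continuous for
`|q| < 1`, with value `1 - x` at `q = 0`, both `θ(w; q)` and `θ(aw; q)` tend to `1` while
`θ(a; q)` tends to `1 - a`. -/

/-- The infinite `q`-Pochhammer symbol `(a; q)_∞ = ∏_{k ≥ 0} (1 - a q^k)`, of which theta functions
are products. The factors are written `1 + -(a q^k)` to match the form used in Mathlib's results on
infinite products. -/
noncomputable def qPochhammer {R : Type*} [CommRing R] [TopologicalSpace R] (a q : R) : R :=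
  ∏' k : ℕ, (1 + -(a * q ^ k))

lemma qPochhammer_zero_right {R : Type*} [CommRing R] [TopologicalSpace R] (a : R) :
    qPochhammer a 0 = 1 - a := by
  rw [qPochhammer, tprod_eq_mulSingle 0 fun k hk ↦ by simp [hk]]
  simp [sub_eq_add_neg]

section NormedCommRing

variable {R : Type*} [NormedCommRing R] [NormOneClass R]

lemma norm_neg_mul_pow_le (a q : R) (k : ℕ) : ‖-(a * q ^ k)‖ ≤ ‖a‖ * ‖q‖ ^ k := by
  rw [norm_neg]
  exact (norm_mul_le _ _).trans (by gcongr; exact norm_pow_le q k)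

variable [CompleteSpace R]

lemma multipliable_qPochhammer (a : R) {q : R} (hq : ‖q‖ < 1) :
    Multipliable fun k : ℕ ↦ 1 + -(a * q ^ k) :=
  multipliable_one_add_of_summable <|
    ((summable_geometric_of_lt_one (norm_nonneg q) hq).mul_left ‖a‖).of_nonneg_of_le
      (fun _ ↦ norm_nonneg _) (norm_neg_mul_pow_le a q)

lemma qPochhammer_eq_one_sub_mul (a : R) {q : R} (hq : ‖q‖ < 1) :
    qPochhammer a q = (1 - a) * qPochhammer (q * a) q := by
  have shift (k : ℕ) : 1 + -(q * a * q ^ k) = 1 + -(a * q ^ (k + 1)) := by ring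
  have h := (multipliable_qPochhammer (q * a) hq).congr shift
  calc qPochhammer a q
      = (1 + -(a * q ^ 0)) * ∏' k : ℕ, (1 + -(a * q ^ (k + 1))) :=
        tprod_eq_zero_mul' (f := fun k : ℕ ↦ 1 + -(a * q ^ k)) h
    _ = (1 - a) * qPochhammer (q * a) q := by
        rw [pow_zero, mul_one, ← sub_eq_add_neg, qPochhammer, tprod_congr shift]

lemma continuousAt_qPochhammer (a : R) {q : R} (hq : ‖q‖ < 1) :
    ContinuousAt (fun p : R × R ↦ qPochhammer p.1 p.2) (a, q) := by
  obtain ⟨r, hqr, hr⟩ := exists_between hq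
  have hr0 : 0 ≤ r := (norm_nonneg q).trans hqr.le
  refine tendsto_tprod_one_add_of_dominated_convergence (bound := fun k ↦ (‖a‖ + 1) * r ^ k)
    ((summable_geometric_of_lt_one hr0 hr).mul_left _)
    (fun k ↦ Continuous.tendsto (by fun_prop) (a, q)) ?_
  have h_fst : ∀ᶠ p : R × R in 𝓝 (a, q), ‖p.1‖ < ‖a‖ + 1 :=
    continuousAt_fst.norm.eventually_lt_const (lt_add_one _)
  have h_snd : ∀ᶠ p : R × R in 𝓝 (a, q), ‖p.2‖ < r :=
    continuousAt_snd.norm.eventually_lt_const hqr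
  filter_upwards [h_fst, h_snd] with p hp₁ hp₂ k
  exact (norm_neg_mul_pow_le p.1 p.2 k).trans (by gcongr)

lemma tendsto_qPochhammer_of_tendsto_zero {ι : Type*} {l : Filter ι} {x q : ι → R} {c : R}
    (hx : Tendsto x l (𝓝 c)) (hq : Tendsto q l (𝓝 0)) :
    Tendsto (fun i ↦ qPochhammer (x i) (q i)) l (𝓝 (1 - c)) := by
  rw [← qPochhammer_zero_right c]
  exact (continuousAt_qPochhammer c (by simp)).tendsto.comp (hx.prodMk_nhds hq)

end NormedCommRing

/-- The modified Jacobi theta function `θ(x; q) = (x; q)_∞ (q/x; q)_∞`: it agrees with `qTheta q x`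
up to the factor `-x^{-1/2}`, and involves no square roots. -/
noncomputable def modifiedTheta {𝕜 : Type*} [Field 𝕜] [TopologicalSpace 𝕜] (x q : 𝕜) : 𝕜 :=
  qPochhammer x q * qPochhammer (q / x) q

section NormedField

variable {𝕜 : Type*} [NormedField 𝕜] [CompleteSpace 𝕜]

lemma modifiedTheta_mul_left {x q : 𝕜} (hx : x ≠ 0) (hq₀ : q ≠ 0) (hq : ‖q‖ < 1) :
    modifiedTheta (q * x) q = -x⁻¹ * modifiedTheta x q := by
  calc modifiedTheta (q * x) q
      = qPochhammer (q * x) q * qPochhammer x⁻¹ q := by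
        rw [modifiedTheta, div_mul_cancel_left₀ hq₀]
    _ = qPochhammer (q * x) q * ((1 - x⁻¹) * qPochhammer (q / x) q) := by
        rw [qPochhammer_eq_one_sub_mul x⁻¹ hq, div_eq_mul_inv]
    _ = -x⁻¹ * ((1 - x) * qPochhammer (q * x) q * qPochhammer (q / x) q) := by
        field_simp
        ring
    _ = -x⁻¹ * modifiedTheta x q := by
        rw [modifiedTheta, qPochhammer_eq_one_sub_mul x hq]

lemma tendsto_modifiedTheta_of_tendsto_zero {ι : Type*} {l : Filter ι} {x q : ι → 𝕜} {c : 𝕜}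
    (hx : Tendsto x l (𝓝 c)) (hq : Tendsto q l (𝓝 0)) (hqx : Tendsto (fun i ↦ q i / x i) l (𝓝 0)) :
    Tendsto (fun i ↦ modifiedTheta (x i) (q i)) l (𝓝 (1 - c)) := by
  simpa [modifiedTheta] using (tendsto_qPochhammer_of_tendsto_zero hx hq).mul
    (tendsto_qPochhammer_of_tendsto_zero hqx hq)

end NormedField

lemma qTheta_eq_modifiedTheta {q x : ℝ} (hq : |q| < 1) (hx : 0 < x) :
    qTheta q x = -(√x)⁻¹ * modifiedTheta x q := by
  have h_tprod : ∏' i : ℕ, (1 - x * q ^ (i + 1)) * (1 - x⁻¹ * q ^ (i + 1)) =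
      qPochhammer (q * x) q * qPochhammer (q / x) q := by
    rw [qPochhammer, qPochhammer,
      ← (multipliable_qPochhammer _ hq).tprod_mul (multipliable_qPochhammer _ hq)]
    exact tprod_congr fun i ↦ by ring
  have h_sqrt : √x - (√x)⁻¹ = -(√x)⁻¹ * (1 - x) := by
    have := Real.sqrt_pos.2 hx
    field_simp
    rw [Real.sq_sqrt hx.le]
    ring
  rw [qTheta, h_tprod, h_sqrt, modifiedTheta, qPochhammer_eq_one_sub_mul x hq]
  ring

lemma fTheta_eq_modifiedTheta {q w a : ℝ} (hq : |q| < 1) (hw : 0 < w) (ha : 0 < a) :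
    fTheta q w a =
      -(modifiedTheta (a * w) q / (modifiedTheta a q * modifiedTheta w q)) := by
  have : √a ≠ 0 := (Real.sqrt_pos.2 ha).ne'
  have : √w ≠ 0 := (Real.sqrt_pos.2 hw).ne'
  rw [fTheta, qTheta_eq_modifiedTheta hq (mul_pos ha hw), qTheta_eq_modifiedTheta hq ha,
    qTheta_eq_modifiedTheta hq hw, Real.sqrt_mul ha.le]
  field_simp

lemma fTheta_mul_left {q w a : ℝ} (hq₀ : 0 < q) (hq₁ : q < 1) (hw : 0 < w) (ha : 0 < a) :
    fTheta q (q * w) a = a⁻¹ * fTheta q w a := by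
  have hq : |q| < 1 := by rwa [abs_of_pos hq₀]
  rw [fTheta_eq_modifiedTheta hq (mul_pos hq₀ hw) ha, fTheta_eq_modifiedTheta hq hw ha,
    mul_left_comm, modifiedTheta_mul_left (mul_pos ha hw).ne' hq₀.ne' hq,
    modifiedTheta_mul_left hw.ne' hq₀.ne' hq]
  field_simp

lemma fTheta_zpow_mul_left {q w a : ℝ} (hq₀ : 0 < q) (hq₁ : q < 1) (hw : 0 < w) (ha : 0 < a)
    (n : ℤ) : fTheta q (q ^ n * w) a = a ^ (-n) * fTheta q w a := by
  have step (m : ℤ) : fTheta q (q ^ (m + 1) * w) a = a⁻¹ * fTheta q (q ^ m * w) a := by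
    rw [← fTheta_mul_left hq₀ hq₁ (by positivity) ha, zpow_add_one₀ hq₀.ne', mul_comm (q ^ m),
      mul_assoc]
  induction n using Int.induction_on with
  | zero => simp
  | succ n ih =>
    rw [step, ih, neg_add, zpow_add₀ ha.ne', zpow_neg_one]
    ring
  | pred n ih =>
    rw [← sub_add_cancel (-n : ℤ) 1, step, inv_mul_eq_iff_eq_mul₀ ha.ne', sub_add_cancel] at ih
    rw [ih, neg_sub, sub_eq_add_neg, zpow_add₀ ha.ne', zpow_one, mul_assoc]

lemma tendsto_fTheta_of_tendsto_zero {ι : Type*} {l : Filter ι} {q w : ι → ℝ} {a : ℝ}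
    (hq : Tendsto q l (𝓝 0)) (hw : Tendsto w l (𝓝[>] 0))
    (hqw : Tendsto (fun i ↦ q i / w i) l (𝓝 0)) (ha : 0 < a) (ha₁ : a ≠ 1) :
    Tendsto (fun i ↦ fTheta (q i) (w i) a) l (𝓝 (a - 1)⁻¹) := by
  obtain ⟨hw₀, hw_pos⟩ := tendsto_nhdsWithin_iff.1 hw
  have h_a : Tendsto (fun i ↦ modifiedTheta a (q i)) l (𝓝 (1 - a)) :=
    tendsto_modifiedTheta_of_tendsto_zero tendsto_const_nhds hq (by simpa using hq.div_const a)
  have h_w : Tendsto (fun i ↦ modifiedTheta (w i) (q i)) l (𝓝 1) := by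
    simpa using tendsto_modifiedTheta_of_tendsto_zero hw₀ hq hqw
  have h_aw : Tendsto (fun i ↦ modifiedTheta (a * w i) (q i)) l (𝓝 1) := by
    simpa using tendsto_modifiedTheta_of_tendsto_zero (hw₀.const_mul a) hq
      (by simpa [div_mul_eq_div_div_swap] using hqw.div_const a)
  have h_lim := (h_aw.div (h_a.mul h_w) (by simpa [sub_eq_zero] using ha₁.symm)).neg
  rw [mul_one, one_div, ← inv_neg, neg_sub] at h_lim
  refine h_lim.congr' ?_
  filter_upwards [hw_pos, hq.abs.eventually_lt_const (by simp : |(0 : ℝ)| < 1)] with i hwi hqi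
  exact (fTheta_eq_modifiedTheta hqi hwi ha).symm

lemma tendsto_const_mul_rpow_nhdsGT_zero {c t : ℝ} (hc : 0 < c) (ht : 0 < t) :
    Tendsto (fun x : ℝ ↦ c * x ^ t) (𝓝[>] 0) (𝓝[>] 0) := by
  refine tendsto_nhdsWithin_iff.2 ⟨tendsto_nhdsWithin_of_tendsto_nhds ?_, ?_⟩
  · simpa [Real.zero_rpow ht.ne'] using
      (Real.continuousAt_rpow_const 0 t (Or.inr ht.le)).tendsto.const_mul c
  · filter_upwards [self_mem_nhdsWithin] with x hx
    exact mul_pos hc (Real.rpow_pos_of_pos hx t)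

lemma tendsto_fTheta_mul_rpow {t a z : ℝ} (ht₀ : 0 < t) (ht₁ : t < 1) (ha : 0 < a) (ha₁ : a ≠ 1)
    (hz : 0 < z) :
    Tendsto (fun q ↦ fTheta q (z * q ^ t) a) (𝓝[>] 0) (𝓝 (a - 1)⁻¹) := by
  refine tendsto_fTheta_of_tendsto_zero (tendsto_nhdsWithin_of_tendsto_nhds tendsto_id)
    (tendsto_const_mul_rpow_nhdsGT_zero hz ht₀) ?_ ha ha₁
  refine ((tendsto_const_mul_rpow_nhdsGT_zero (inv_pos.2 hz) (sub_pos.2 ht₁)).mono_right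
    nhdsWithin_le_nhds).congr' ?_
  filter_upwards [self_mem_nhdsWithin] with q hq
  rw [Real.rpow_sub hq, Real.rpow_one]
  field_simp

/-- For non-integer real `s` and reals `a, z > 0` with `a ≠ 1`,
`f_q(z q^s, a) → a^{-⌊s⌋} / (a - 1)` as `q → 0⁺`, with `q` ranging over `(0,1)`.
In particular, for non-integer `s` the limit is independent of `z`. -/
theorem fTheta_limit_nonintegral (s : ℝ) (hs : ∀ k : ℤ, s ≠ (k : ℝ))
    (a z : ℝ) (ha : 0 < a) (hz : 0 < z) (ha1 : a ≠ 1) :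
    Tendsto (fun q : ℝ => fTheta q (z * q ^ s) a)
      (𝓝[Set.Ioo (0:ℝ) 1] 0) (𝓝 (a ^ (-⌊s⌋) / (a - 1))) := by
  rw [nhdsWithin_Ioo_eq_nhdsGT zero_lt_one, div_eq_mul_inv]
  have h_fract : Tendsto (fun q ↦ fTheta q (z * q ^ Int.fract s) a) (𝓝[>] 0) (𝓝 (a - 1)⁻¹) :=
    tendsto_fTheta_mul_rpow (Int.fract_pos.2 (hs ⌊s⌋)) (Int.fract_lt_one s) ha ha1 hz
  refine (h_fract.const_mul (a ^ (-⌊s⌋))).congr' ?_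
  filter_upwards [Ioo_mem_nhdsGT zero_lt_one] with q ⟨hq₀, hq₁⟩
  have h_rpow : z * q ^ s = q ^ ⌊s⌋ * (z * q ^ Int.fract s) := by
    rw [mul_left_comm, ← Real.rpow_intCast, ← Real.rpow_add hq₀, Int.floor_add_fract]
  rw [h_rpow, fTheta_zpow_mul_left hq₀ hq₁ (by positivity) ha]
end

section
/- Let s be an integer and let a, z > 0 be real numbers with a ≠ 1 and z ≠ 1. Then f_q(z q^{s}, a) tends to ((1 − z a)/((a − 1)(1 − z))) · a^{−s} as q tends to 0 from the right (q ranging over (0,1)). -/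
open Filter Topology

/-!
The recurrence `(a; q)_∞ = (1 - a) (a q; q)_∞` makes `θ_q` quasi-periodic,
`θ_q(x q) = -q^{-1/2} x⁻¹ θ_q(x)`, and the multipliers cancel in `f_q` except for a factor `a⁻¹`.
Hence `f_q(z q^s, a) = a^{-s} f_q(z, a)` holds exactly for every `q ∈ (0, 1)`. By dominated
convergence `f_q(z, a)` is continuous in `q` at `q = 0`, where all the infinite products are `1`.
-/

section QPochhammer

variable {R : Type*} [NormedCommRing R]

/-- The infinite q-Pochhammer symbol `(a; q)_∞ = ∏_{i ≥ 0} (1 - a q^i)`, in terms of which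
`θ_q(x) = (x^{1/2} - x^{-1/2}) (x q; q)_∞ (x⁻¹ q; q)_∞`. The product converges when `‖q‖ < 1`. -/
noncomputable def qPochhammerInf (a q : R) : R :=
  ∏' i : ℕ, (1 - a * q ^ i)

theorem norm_mul_pow_le [NormOneClass R] {a q : R} {C r : ℝ} (ha : ‖a‖ ≤ C) (hq : ‖q‖ ≤ r)
    (i : ℕ) : ‖a * q ^ i‖ ≤ C * r ^ i :=
  calc ‖a * q ^ i‖ ≤ ‖a‖ * ‖q ^ i‖ := norm_mul_le _ _
    _ ≤ ‖a‖ * ‖q‖ ^ i := by gcongr; exact norm_pow_le q i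
    _ ≤ C * r ^ i := by gcongr; exact (norm_nonneg a).trans ha

variable [NormOneClass R] [CompleteSpace R]

theorem multipliable_one_sub_mul_pow (a : R) {q : R} (hq : ‖q‖ < 1) :
    Multipliable fun i : ℕ ↦ 1 - a * q ^ i := by
  have hsum : Summable fun i : ℕ ↦ ‖-(a * q ^ i)‖ :=
    .of_nonneg_of_le (fun _ ↦ norm_nonneg _)
      (fun i ↦ (norm_neg _).trans_le (norm_mul_pow_le le_rfl le_rfl i))
      ((summable_geometric_of_lt_one (norm_nonneg q) hq).mul_left ‖a‖)
  simpa only [← sub_eq_add_neg] using multipliable_one_add_of_summable hsum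

theorem qPochhammerInf_eq_one_sub_mul (a : R) {q : R} (hq : ‖q‖ < 1) :
    qPochhammerInf a q = (1 - a) * qPochhammerInf (a * q) q := by
  have hshift (i : ℕ) : 1 - a * q ^ (i + 1) = 1 - a * q * q ^ i := by ring
  have hmul : Multipliable fun i : ℕ ↦ 1 - a * q ^ (i + 1) := by
    simpa only [hshift] using multipliable_one_sub_mul_pow (a * q) hq
  rw [qPochhammerInf, tprod_eq_zero_mul' (f := fun i ↦ 1 - a * q ^ i) hmul, pow_zero, mul_one]
  simp only [hshift, qPochhammerInf]

theorem continuousAt_qPochhammerInf {p : R × R} (hp : ‖p.2‖ < 1) :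
    ContinuousAt (fun p : R × R ↦ qPochhammerInf p.1 p.2) p := by
  obtain ⟨r, hpr, hr⟩ := exists_between hp
  have hsum : Summable fun i : ℕ ↦ (‖p.1‖ + 1) * r ^ i :=
    (summable_geometric_of_lt_one ((norm_nonneg _).trans hpr.le) hr).mul_left _
  have hfst : ∀ᶠ x : R × R in 𝓝 p, ‖x.1‖ < ‖p.1‖ + 1 :=
    continuous_fst.norm.continuousAt.eventually_lt_const (lt_add_one _)
  have hsnd : ∀ᶠ x : R × R in 𝓝 p, ‖x.2‖ < r :=
    continuous_snd.norm.continuousAt.eventually_lt_const hpr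
  simp only [ContinuousAt, qPochhammerInf, sub_eq_add_neg]
  refine tendsto_tprod_one_add_of_dominated_convergence hsum (fun i ↦ ?_) ?_
  · exact Continuous.tendsto (by fun_prop) p
  · filter_upwards [hfst, hsnd] with x hx₁ hx₂ i
    exact (norm_neg _).trans_le (norm_mul_pow_le hx₁.le hx₂.le i)

end QPochhammer

theorem sqrt_sub_inv_sqrt (x : ℝ) : √x - (√x)⁻¹ = (x - 1) / √x := by
  rw [sub_div, Real.div_sqrt, one_div]

section QTheta

variable {q : ℝ}

theorem qTheta_eq_qPochhammerInf (hq : ‖q‖ < 1) (x : ℝ) :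
    qTheta q x =
      (x - 1) / √x * (qPochhammerInf (x * q) q * qPochhammerInf (x⁻¹ * q) q) := by
  have hpow (y : ℝ) (i : ℕ) : y * q ^ (i + 1) = y * q * q ^ i := by ring
  simp only [qTheta, qPochhammerInf, hpow, sqrt_sub_inv_sqrt]
  rw [(multipliable_one_sub_mul_pow _ hq).tprod_mul (multipliable_one_sub_mul_pow _ hq)]

theorem qTheta_zero (x : ℝ) : qTheta 0 x = (x - 1) / √x := by
  simp [qTheta, sqrt_sub_inv_sqrt]

theorem qTheta_zero_ne_zero {x : ℝ} (hx : 0 < x) (hx1 : x ≠ 1) : qTheta 0 x ≠ 0 := by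
  rw [qTheta_zero]
  exact div_ne_zero (sub_ne_zero.2 hx1) (Real.sqrt_pos.2 hx).ne'

theorem continuousAt_qTheta (hq : ‖q‖ < 1) (x : ℝ) : ContinuousAt (fun q ↦ qTheta q x) q := by
  have hpoch (y : ℝ) : ContinuousAt (fun q ↦ qPochhammerInf (y * q) q) q :=
    ContinuousAt.comp (f := fun q ↦ (y * q, q)) (continuousAt_qPochhammerInf hq) (by fun_prop)
  refine (((hpoch x).mul (hpoch x⁻¹)).const_mul ((x - 1) / √x)).congr ?_
  filter_upwards [continuous_norm.continuousAt.eventually_lt_const hq] with q' hq'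
  exact (qTheta_eq_qPochhammerInf hq' x).symm

theorem qTheta_mul_base (hq0 : 0 < q) (hq1 : q < 1) {x : ℝ} (hx : 0 < x) :
    qTheta q (x * q) = -(√q)⁻¹ * x⁻¹ * qTheta q x := by
  have hq : ‖q‖ < 1 := by rwa [Real.norm_of_nonneg hq0.le]
  have hinv : (x * q)⁻¹ * q = x⁻¹ := by field_simp
  have hsqrtx : √x ≠ 0 := (Real.sqrt_pos.2 hx).ne'
  have hsqrtq : √q ≠ 0 := (Real.sqrt_pos.2 hq0).ne'
  rw [qTheta_eq_qPochhammerInf hq, qTheta_eq_qPochhammerInf hq, hinv, Real.sqrt_mul hx.le,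
    qPochhammerInf_eq_one_sub_mul (x * q) hq, qPochhammerInf_eq_one_sub_mul x⁻¹ hq]
  field_simp
  ring

end QTheta

section FTheta

variable {q a z : ℝ}

theorem fTheta_mul_base (hq0 : 0 < q) (hq1 : q < 1) (ha : 0 < a) (hz : 0 < z) :
    fTheta q (z * q) a = a⁻¹ * fTheta q z a := by
  have hmultiplier : -(√q)⁻¹ * z⁻¹ ≠ 0 :=
    mul_ne_zero (neg_ne_zero.2 (inv_ne_zero (Real.sqrt_pos.2 hq0).ne')) (inv_ne_zero hz.ne')
  calc fTheta q (z * q) a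
      = (-(√q)⁻¹ * z⁻¹ * (a⁻¹ * qTheta q (a * z))) /
          (-(√q)⁻¹ * z⁻¹ * (qTheta q a * qTheta q z)) := by
        rw [fTheta, ← mul_assoc, qTheta_mul_base hq0 hq1 (mul_pos ha hz),
          qTheta_mul_base hq0 hq1 hz]
        ring
    _ = a⁻¹ * fTheta q z a := by rw [mul_div_mul_left _ _ hmultiplier, mul_div_assoc, fTheta]

theorem fTheta_mul_base_zpow (hq0 : 0 < q) (hq1 : q < 1) (ha : 0 < a) (hz : 0 < z) (s : ℤ) :
    fTheta q (z * q ^ s) a = fTheta q z a * a ^ (-s) := by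
  have hstep (n : ℤ) : fTheta q (z * q ^ (n + 1)) a = a⁻¹ * fTheta q (z * q ^ n) a := by
    rw [zpow_add_one₀ hq0.ne', ← mul_assoc, fTheta_mul_base hq0 hq1 ha (by positivity)]
  induction s using Int.induction_on with
  | zero => simp
  | succ n ih =>
    rw [hstep, ih, neg_add, zpow_add₀ ha.ne', zpow_neg_one]
    ring
  | pred n ih =>
    have hpred := hstep (-n - 1)
    rw [sub_add_cancel, ih, eq_inv_mul_iff_mul_eq₀ ha.ne'] at hpred
    rw [← hpred, neg_sub', sub_neg_eq_add, zpow_add_one₀ ha.ne']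
    ring

theorem fTheta_zero (ha : 0 < a) (hz : 0 < z) :
    fTheta 0 z a = (1 - z * a) / ((a - 1) * (1 - z)) := by
  have hsqrt : √(a * z) ≠ 0 := (Real.sqrt_pos.2 (mul_pos ha hz)).ne'
  calc fTheta 0 z a
      = (a * z - 1) / √(a * z) / ((a - 1) * (z - 1) / √(a * z)) := by
        rw [fTheta, qTheta_zero, qTheta_zero, qTheta_zero, div_mul_div_comm,
          ← Real.sqrt_mul ha.le]
    _ = (a * z - 1) / ((a - 1) * (z - 1)) := div_div_div_cancel_right₀ hsqrt _ _
    _ = (1 - z * a) / ((a - 1) * (1 - z)) := by rw [← neg_div_neg_eq]; ring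

theorem continuousAt_fTheta (hq : ‖q‖ < 1) (ha : qTheta q a ≠ 0) (hz : qTheta q z ≠ 0) :
    ContinuousAt (fun q ↦ fTheta q z a) q :=
  (continuousAt_qTheta hq (a * z)).div
    ((continuousAt_qTheta hq a).mul (continuousAt_qTheta hq z)) (mul_ne_zero ha hz)

end FTheta

/-- For an integer `s` and reals `a, z > 0` with `a ≠ 1` and `z ≠ 1`,
`f_q(z q^s, a) → ((1 - z a)/((a - 1)(1 - z))) a^{-s}` as `q → 0⁺`,
with `q` ranging over `(0,1)`. -/
theorem fTheta_limit_integral (s : ℤ) (a z : ℝ) (ha : 0 < a) (hz : 0 < z)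
    (ha1 : a ≠ 1) (hz1 : z ≠ 1) :
    Tendsto (fun q : ℝ => fTheta q (z * q ^ s) a)
      (𝓝[Set.Ioo (0:ℝ) 1] 0)
      (𝓝 ((1 - z * a) / ((a - 1) * (1 - z)) * a ^ (-s))) := by
  have hcont : ContinuousAt (fun q ↦ fTheta q z a) 0 :=
    continuousAt_fTheta (by simp) (qTheta_zero_ne_zero ha ha1) (qTheta_zero_ne_zero hz hz1)
  rw [← fTheta_zero ha hz]
  refine ((hcont.tendsto.mono_left nhdsWithin_le_nhds).mul_const (a ^ (-s))).congr' ?_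
  filter_upwards [self_mem_nhdsWithin] with q ⟨hq0, hq1⟩
  exact (fTheta_mul_base_zpow hq0 hq1 ha hz s).symm
end
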